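/- Let A ∈ ℝ^{m×n} with m ≤ n and A ≠ 0, with largest and smallest singular values σ₁ and σ_m, let k be a positive integer with 3k ≤ n, and let δ ∈ (0,1) be a restricted isometry constant of order 3k for A with δ < 1/√3. Let ε > max{σ₁², ((σ₁² − σ_m²)/(1/√3 − δ) − 1)σ₁²} and let λ satisfy ε + σ₁² − (1/√3 − δ)(ε + σ₁²)/σ₁² < λ ≤ ε + σ_m². Let x ∈ ℝ^n, e ∈ ℝ^m, y = Ax + e, let x_S be a hard k-thresholding of x, and set e' := A(x − x_S) + e. If (x^p)_{p≥0} is a sequence in ℝ^n such that x^0 is k-sparse and, for every p ≥ 0, x^{p+1} is a hard k-thresholding of x^p + λ(AᵀA + εI)^{−1}Aᵀ(y − Ax^p), then, with ρ := √3(δ + σ₁² − λσ₁²/(ε + σ₁²)), one has ρ < 1 and, for every p ≥ 0, ‖x^p − x_S‖₂ ≤ ρ^p ‖x^0 − x_S‖₂ + τ ‖e'‖₂, where τ := √3 λ σ₁ / ((ε + σ₁²)(1 − ρ)). -/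

import Mathlib

/-!
Put `B = AᵀA`, `G = (B + εI)⁻¹` and `v = xᵖ - x_S`. Since `y - Axᵖ = e' - Av`, the vector that gets
thresholded differs from `x_S` by

  `(v - Bv) + (Bv - λ G B v) + λ G Aᵀ e'`.

Hard thresholding costs a factor `√3` and lets one look only at the coordinates in the union `T`
of the index sets of `x_S` and `xᵖ⁺¹` (`threshold_bound`). On `T` the three terms are bounded by

* `δ ‖v‖`, by polarization of the restricted isometry property of order `3k` (`rip_restrict`);
* `(σ₁² - λσ₁²/(ε+σ₁²)) ‖v‖`, because in an eigenbasis of `B` the operator `B - λGB` has the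
  eigenvalues `s - λs/(s+ε)`, which are nonnegative and increasing in `s` for `s = 0` and
  `σ_m² ≤ s ≤ σ₁²`, as `λ ≤ ε + σ_m²` (`spectral_bound`);
* `λσ₁/(ε+σ₁²) ‖e'‖`, because `√s/(s+ε)` is increasing for `s ≤ ε` (`noise_bound`).

The resulting one-step recursion is summed as a geometric series. Testing the restricted isometry
property on a coordinate vector gives `1 - δ ≤ σ₁²`, which forces `λ > 0`.
-/


open Matrix Filter Topology

/-- Euclidean (ℓ₂) norm of a vector in ℝ^n. -/
noncomputable def norm2 {n : ℕ} (x : Fin n → ℝ) : ℝ := Real.sqrt (∑ i, x i ^ 2)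

/-- Euclidean inner product. -/
def dot {n : ℕ} (u v : Fin n → ℝ) : ℝ := ∑ i, u i * v i

/-- Support of a vector. -/
def supp {n : ℕ} (x : Fin n → ℝ) : Set (Fin n) := {i | x i ≠ 0}

/-- δ ∈ (0,1) is a restricted isometry constant of order q for A. -/
def IsRIC {m n : ℕ} (A : Matrix (Fin m) (Fin n) ℝ) (q : ℕ) (δ : ℝ) : Prop :=
  0 < δ ∧ δ < 1 ∧
    ∀ x : Fin n → ℝ, (supp x).ncard ≤ q →
      (1 - δ) * norm2 x ^ 2 ≤ norm2 (A.mulVec x) ^ 2 ∧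
      norm2 (A.mulVec x) ^ 2 ≤ (1 + δ) * norm2 x ^ 2

/-- σ is the largest singular value (spectral norm) of A: it bounds ‖Av‖₂/‖v‖₂
and this bound is attained. -/
def IsMaxSingularValue {m n : ℕ} (A : Matrix (Fin m) (Fin n) ℝ) (σ : ℝ) : Prop :=
  0 ≤ σ ∧ (∀ v : Fin n → ℝ, norm2 (A.mulVec v) ≤ σ * norm2 v) ∧
    ∃ v : Fin n → ℝ, v ≠ 0 ∧ norm2 (A.mulVec v) = σ * norm2 v

/-- For m ≤ n, σ is the smallest singular value of A, i.e. σ² is the smallest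
eigenvalue of A Aᵀ: σ is the infimum of ‖Aᵀu‖₂/‖u‖₂ and it is attained. -/
def IsMinSingularValue {m n : ℕ} (A : Matrix (Fin m) (Fin n) ℝ) (σ : ℝ) : Prop :=
  0 ≤ σ ∧ (∀ u : Fin m → ℝ, σ * norm2 u ≤ norm2 (Aᵀ.mulVec u)) ∧
    ∃ u : Fin m → ℝ, u ≠ 0 ∧ norm2 (Aᵀ.mulVec u) = σ * norm2 u

/-- w is a hard k-thresholding of z with associated index set S*. -/
def IsHardThresholding {n : ℕ} (k : ℕ) (z w : Fin n → ℝ) (S : Set (Fin n)) : Prop :=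
  S.ncard = k ∧ (∀ i ∈ S, w i = z i) ∧ (∀ i ∉ S, w i = 0) ∧
    ∀ i ∈ S, ∀ j ∉ S, |z j| ≤ |z i|

/-! ### The Euclidean norm -/

lemma norm2_nonneg {n : ℕ} (x : Fin n → ℝ) : 0 ≤ norm2 x := Real.sqrt_nonneg _

lemma norm2_eq_norm {n : ℕ} (x : Fin n → ℝ) : norm2 x = ‖WithLp.toLp 2 x‖ := by
  simp [norm2, EuclideanSpace.norm_eq]

lemma norm2_sq {n : ℕ} (x : Fin n → ℝ) : norm2 x ^ 2 = x ⬝ᵥ x := by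
  rw [norm2, Real.sq_sqrt (Finset.sum_nonneg fun i _ => sq_nonneg _)]
  simp [dotProduct, sq]

lemma norm2_sq_sum {n : ℕ} (x : Fin n → ℝ) : norm2 x ^ 2 = ∑ i, x i ^ 2 := by
  rw [norm2, Real.sq_sqrt (Finset.sum_nonneg fun i _ => sq_nonneg _)]

lemma norm2_add_le {n : ℕ} (x y : Fin n → ℝ) : norm2 (x + y) ≤ norm2 x + norm2 y := by
  simp only [norm2_eq_norm, WithLp.toLp_add]
  exact norm_add_le _ _

lemma norm2_smul {n : ℕ} (c : ℝ) (x : Fin n → ℝ) : norm2 (c • x) = |c| * norm2 x := by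
  simp only [norm2_eq_norm, WithLp.toLp_smul, norm_smul, Real.norm_eq_abs]

lemma norm2_pos {n : ℕ} {x : Fin n → ℝ} (hx : x ≠ 0) : 0 < norm2 x := by
  rw [norm2_eq_norm, norm_pos_iff]
  simpa using hx

lemma dotProduct_le_norm2 {n : ℕ} (x y : Fin n → ℝ) : x ⬝ᵥ y ≤ norm2 x * norm2 y := by
  have := real_inner_le_norm (WithLp.toLp 2 x) (WithLp.toLp 2 y)
  simpa [norm2_eq_norm, EuclideanSpace.inner_eq_star_dotProduct, dotProduct_comm] using this

lemma norm2_indicator_le {n : ℕ} (T : Set (Fin n)) (x : Fin n → ℝ) :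
    norm2 (T.indicator x) ≤ norm2 x := by
  unfold norm2
  apply Real.sqrt_le_sqrt
  apply Finset.sum_le_sum
  intro i _
  by_cases h : i ∈ T
  · simp [h]
  · simp [h, sq_nonneg]

lemma mulVec_dot {m n : ℕ} (A : Matrix (Fin m) (Fin n) ℝ) (v : Fin n → ℝ) (u : Fin m → ℝ) :
    (A *ᵥ v) ⬝ᵥ u = v ⬝ᵥ (Aᵀ *ᵥ u) := by
  rw [Matrix.mulVec_transpose, dotProduct_comm, Matrix.dotProduct_mulVec, dotProduct_comm]

lemma le_of_sq_le_sq_of_nonneg {a b : ℝ} (h : a ^ 2 ≤ b ^ 2) (hb : 0 ≤ b) : a ≤ b :=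
  (abs_le_of_sq_le_sq' h hb).2

/-! ### Hard thresholding -/

lemma sum_le_sum_of_card_eq {ι : Type*} {P Q : Finset ι} (h : P.card = Q.card) (f : ι → ℝ)
    (hf : ∀ i ∈ P, ∀ j ∈ Q, f i ≤ f j) : ∑ i ∈ P, f i ≤ ∑ j ∈ Q, f j := by
  rw [← Finset.sum_coe_sort P, ← Finset.sum_coe_sort Q,
    ← Equiv.sum_comp (Finset.equivOfCardEq h)]
  exact Finset.sum_le_sum fun i _ => hf _ i.2 _ (Subtype.prop _)

/-- A hard `k`-thresholding `w` of `u` is, up to the factor `√3`, as close to a vector `a` supported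
on `k` indices as `u` itself is on the union of the two index sets. -/
lemma threshold_bound {n k : ℕ} {u w a : Fin n → ℝ} {S T : Set (Fin n)}
    (hT : IsHardThresholding k u w T) (hS : S.ncard = k) (ha : ∀ i ∉ S, a i = 0) :
    norm2 (w - a) ≤ Real.sqrt 3 * norm2 ((S ∪ T).indicator (u - a)) := by
  classical
  obtain ⟨hTk, hw, hw0, hmax⟩ := hT
  have hswap : ∑ i ∈ S.toFinset \ T.toFinset, u i ^ 2 ≤ ∑ i ∈ T.toFinset \ S.toFinset, u i ^ 2 := by
    apply sum_le_sum_of_card_eq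
    · apply Finset.card_sdiff_comm
      rw [← Set.ncard_eq_toFinset_card', ← Set.ncard_eq_toFinset_card', hS, hTk]
    · intro i hi j hj
      simp only [Finset.mem_sdiff, Set.mem_toFinset] at hi hj
      exact sq_le_sq.2 (hmax j hj.1 i hi.2)
  have key : norm2 (w - a) ^ 2 ≤ 3 * norm2 ((S ∪ T).indicator (u - a)) ^ 2 := by
    rw [norm2_sq_sum, norm2_sq_sum, Finset.mul_sum]
    -- the last two terms exchange the discarded indices `S \ T` for the selected ones `T \ S`
    have hpt : ∀ i, (w - a) i ^ 2 ≤ 3 * (S ∪ T).indicator (u - a) i ^ 2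
        + 2 * (if i ∈ S.toFinset \ T.toFinset then u i ^ 2 else 0)
        - 2 * (if i ∈ T.toFinset \ S.toFinset then u i ^ 2 else 0) := by
      intro i
      by_cases h1 : i ∈ S <;> by_cases h2 : i ∈ T
      · simp [h1, h2, hw i h2]; nlinarith [sq_nonneg (u i - a i)]
      · simp [h1, h2, hw0 i h2]; nlinarith [sq_nonneg (u i + (u i - a i)), sq_nonneg (u i - a i)]
      · simp [h1, h2, hw i h2, ha i h1]; nlinarith [sq_nonneg (u i)]
      · simp [h1, h2, hw0 i h2, ha i h1]
    have := Finset.sum_le_sum fun i (_ : i ∈ Finset.univ) => hpt i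
    rw [Finset.sum_sub_distrib, Finset.sum_add_distrib, ← Finset.mul_sum _ _ (2 : ℝ),
      ← Finset.mul_sum _ _ (2 : ℝ), Finset.sum_ite_mem, Finset.sum_ite_mem,
      Finset.univ_inter, Finset.univ_inter] at this
    linarith
  refine le_of_sq_le_sq_of_nonneg ?_ (mul_nonneg (Real.sqrt_nonneg _) (norm2_nonneg _))
  rw [mul_pow, Real.sq_sqrt (by norm_num)]
  exact key

/-! ### The restricted isometry property -/

lemma rip_quad {m n q : ℕ} {A : Matrix (Fin m) (Fin n) ℝ} {δ : ℝ} (hδ : IsRIC A q δ)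
    {U : Set (Fin n)} (hU : U.ncard ≤ q) {z : Fin n → ℝ} (hz : ∀ i ∉ U, z i = 0) :
    |z ⬝ᵥ z - (A *ᵥ z) ⬝ᵥ (A *ᵥ z)| ≤ δ * (z ⬝ᵥ z) := by
  have hsub : supp z ⊆ U := fun i hi => by
    by_contra h
    exact hi (hz i h)
  have := hδ.2.2 z ((Set.ncard_le_ncard hsub (Set.toFinite _)).trans hU)
  rw [norm2_sq, norm2_sq] at this
  rw [abs_le]
  constructor <;> linarith [this.1, this.2]

/-- Polarized form of the restricted isometry property. -/
lemma rip_bilin {m n q : ℕ} {A : Matrix (Fin m) (Fin n) ℝ} {δ : ℝ} (hδ : IsRIC A q δ)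
    {U : Set (Fin n)} (hU : U.ncard ≤ q) {t v : Fin n → ℝ} (ht : ∀ i ∉ U, t i = 0)
    (hv : ∀ i ∉ U, v i = 0) :
    t ⬝ᵥ v - (A *ᵥ t) ⬝ᵥ (A *ᵥ v) ≤ δ * (norm2 t * norm2 v) := by
  rcases eq_or_ne t 0 with rfl | ht0
  · simp [norm2]
  rcases eq_or_ne v 0 with rfl | hv0
  · simp [norm2]
  have hp := norm2_pos ht0
  have hq := norm2_pos hv0
  -- the weights make the two summands equally long, so that half the sum of their
  -- squared norms is the product of their norms
  have h1 := (abs_le.1 (rip_quad hδ hU (z := norm2 v • t + norm2 t • v)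
    (fun i hi => by simp [ht i hi, hv i hi]))).2
  have h2 := (abs_le.1 (rip_quad hδ hU (z := norm2 v • t - norm2 t • v)
    (fun i hi => by simp [ht i hi, hv i hi]))).1
  simp only [Matrix.mulVec_add, Matrix.mulVec_sub, Matrix.mulVec_smul, add_dotProduct,
    dotProduct_add, sub_dotProduct, dotProduct_sub, smul_dotProduct, dotProduct_smul,
    smul_eq_mul, dotProduct_comm v t, dotProduct_comm (A *ᵥ v) (A *ᵥ t), ← norm2_sq] at h1 h2
  have hpq := mul_pos hp hq
  refine le_of_mul_le_mul_left ?_ hpq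
  nlinarith [h1, h2]

/-- Compressed to an index set `U` with at most `q` elements, `I - AᵀA` has norm at most `δ`. -/
lemma rip_restrict {m n q : ℕ} {A : Matrix (Fin m) (Fin n) ℝ} {δ : ℝ} (hδ : IsRIC A q δ)
    {U T : Set (Fin n)} (hU : U.ncard ≤ q) (hTU : T ⊆ U) {v : Fin n → ℝ}
    (hv : ∀ i ∉ U, v i = 0) :
    norm2 (T.indicator (v - (Aᵀ * A) *ᵥ v)) ≤ δ * norm2 v := by
  set t := T.indicator (v - (Aᵀ * A) *ᵥ v) with ht
  have h := rip_bilin hδ hU (t := t) (v := v)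
    (fun i hi => Set.indicator_of_notMem (fun h => hi (hTU h)) _) hv
  have h2 : norm2 t ^ 2 = t ⬝ᵥ v - (A *ᵥ t) ⬝ᵥ (A *ᵥ v) := by
    rw [mulVec_dot, Matrix.mulVec_mulVec, ← dotProduct_sub, norm2_sq, dotProduct, dotProduct]
    refine Finset.sum_congr rfl fun i _ => ?_
    by_cases hi : i ∈ T
    · simp [ht, hi]
    · simp [ht, hi]
  rcases (norm2_nonneg t).eq_or_lt with h0 | h0
  · rw [← h0]; exact mul_nonneg hδ.1.le (norm2_nonneg v)
  · refine le_of_mul_le_mul_left ?_ h0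
    nlinarith

/-! ### Spectral estimates -/

/-- An orthonormal eigenbasis of `AᵀA` in coordinates. The singular value bounds confine each
eigenvalue to `[0, σ₁²]`, and a nonzero one to `[σ_m², σ₁²]`. -/
lemma exists_eigenbasis {m n : ℕ} {A : Matrix (Fin m) (Fin n) ℝ} {σ1 σm : ℝ}
    (hσ1 : IsMaxSingularValue A σ1) (hσm : IsMinSingularValue A σm) :
    ∃ (b : Fin n → Fin n → ℝ) (s : Fin n → ℝ),
      (∀ i, (Aᵀ * A) *ᵥ b i = s i • b i) ∧
      (∀ v : Fin n → ℝ, norm2 v ^ 2 = ∑ i, (b i ⬝ᵥ v) ^ 2) ∧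
      (∀ i, 0 ≤ s i) ∧ (∀ i, s i ≤ σ1 ^ 2) ∧ (∀ i, s i = 0 ∨ σm ^ 2 ≤ s i) := by
  have hB : (Aᵀ * A).IsHermitian := by
    simpa using Matrix.isHermitian_conjTranspose_mul_self A
  let b : Fin n → Fin n → ℝ := fun i => (hB.eigenvectorBasis i).ofLp
  have heig : ∀ i, (Aᵀ * A) *ᵥ b i = hB.eigenvalues i • b i := fun i =>
    hB.mulVec_eigenvectorBasis i
  have hpars : ∀ v : Fin n → ℝ, norm2 v ^ 2 = ∑ i, (b i ⬝ᵥ v) ^ 2 := by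
    intro v
    rw [norm2_eq_norm, ← hB.eigenvectorBasis.sum_sq_norm_inner_right]
    refine Finset.sum_congr rfl fun i _ => ?_
    simp [EuclideanSpace.inner_eq_star_dotProduct, b, dotProduct_comm]
  have hone : ∀ i, norm2 (b i) = 1 := fun i => by
    rw [norm2_eq_norm]
    exact hB.eigenvectorBasis.orthonormal.1 i
  have hs : ∀ i, hB.eigenvalues i = norm2 (A *ᵥ b i) ^ 2 := by
    intro i
    rw [norm2_sq, mulVec_dot, Matrix.mulVec_mulVec, heig, dotProduct_smul, ← norm2_sq, hone]
    simp
  refine ⟨b, hB.eigenvalues, heig, hpars, fun i => ?_, fun i => ?_, fun i => ?_⟩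
  · rw [hs]; positivity
  · rw [hs]
    have := hσ1.2.1 (b i)
    rw [hone, mul_one] at this
    exact pow_le_pow_left₀ (norm2_nonneg _) this 2
  · by_cases h0 : hB.eigenvalues i = 0
    · exact Or.inl h0
    right
    have h := hσm.2.1 (A *ᵥ b i)
    rw [Matrix.mulVec_mulVec, heig, norm2_smul, hone, mul_one, hs, abs_of_nonneg (sq_nonneg _)] at h
    have hpos : 0 < norm2 (A *ᵥ b i) := by
      refine lt_of_le_of_ne (norm2_nonneg _) fun h' => h0 ?_
      rw [hs, ← h']; norm_num
    rw [hs]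
    refine pow_le_pow_left₀ hσm.1 ?_ 2
    refine le_of_mul_le_mul_right ?_ hpos
    linarith [sq (norm2 (A *ᵥ b i))]

/-- Coordinates of `B *ᵥ v` in an eigenbasis of the symmetric matrix `B = AᵀA`. -/
lemma dot_gram {m n : ℕ} {A : Matrix (Fin m) (Fin n) ℝ} {b : Fin n → ℝ} {s : ℝ}
    (hb : (Aᵀ * A) *ᵥ b = s • b) (v : Fin n → ℝ) : b ⬝ᵥ ((Aᵀ * A) *ᵥ v) = s * (b ⬝ᵥ v) := by
  rw [← Matrix.mulVec_mulVec, ← mulVec_dot, dotProduct_comm, mulVec_dot, Matrix.mulVec_mulVec, hb,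
    dotProduct_smul, dotProduct_comm, smul_eq_mul]

lemma resolvent_mulVec {m n : ℕ} (A : Matrix (Fin m) (Fin n) ℝ) {ε : ℝ} (hε : 0 < ε)
    (z : Fin n → ℝ) :
    (Aᵀ * A) *ᵥ ((Aᵀ * A + ε • (1 : Matrix (Fin n) (Fin n) ℝ))⁻¹ *ᵥ z)
      + ε • ((Aᵀ * A + ε • (1 : Matrix (Fin n) (Fin n) ℝ))⁻¹ *ᵥ z) = z := by
  have hB : (Aᵀ * A).PosSemidef := by
    simpa using Matrix.posSemidef_conjTranspose_mul_self A
  have hP : (Aᵀ * A + ε • (1 : Matrix (Fin n) (Fin n) ℝ)).PosDef :=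
    Matrix.PosDef.posSemidef_add hB (Matrix.PosDef.one.smul hε)
  have hu : IsUnit (Aᵀ * A + ε • (1 : Matrix (Fin n) (Fin n) ℝ)).det :=
    (Matrix.isUnit_iff_isUnit_det _).1 hP.isUnit
  have h : (Aᵀ * A + ε • (1 : Matrix (Fin n) (Fin n) ℝ)) *ᵥ
      ((Aᵀ * A + ε • (1 : Matrix (Fin n) (Fin n) ℝ))⁻¹ *ᵥ z) = z := by
    rw [Matrix.mulVec_mulVec, Matrix.mul_nonsing_inv _ hu, Matrix.one_mulVec]
  rw [Matrix.add_mulVec, Matrix.smul_mulVec, Matrix.one_mulVec] at h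
  exact h

/-- The eigenvalues of `B - λ(B + ε)⁻¹B` lie between `0` and the one belonging to `σ₁²`. -/
lemma eigenvalue_bound {s σ1 σm ε lam : ℝ} (hε : 0 < ε) (hs : 0 ≤ s) (hs1 : s ≤ σ1 ^ 2)
    (hsm : s = 0 ∨ σm ^ 2 ≤ s) (hm1 : σm ^ 2 ≤ σ1 ^ 2)
    (hlam : lam ≤ ε + σm ^ 2) :
    0 ≤ s - lam * s / (s + ε) ∧
      s - lam * s / (s + ε) ≤ σ1 ^ 2 - lam * σ1 ^ 2 / (ε + σ1 ^ 2) := by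
  have hse : 0 < s + ε := by linarith
  have hσe : 0 < ε + σ1 ^ 2 := by positivity
  rcases hsm with rfl | hsm
  · refine ⟨by simp, ?_⟩
    rw [mul_zero, zero_div, sub_zero, sub_nonneg, div_le_iff₀ hσe]
    nlinarith [sq_nonneg σ1]
  · refine ⟨?_, ?_⟩
    · rw [sub_nonneg, div_le_iff₀ hse]
      nlinarith
    · have h : σ1 ^ 2 - lam * σ1 ^ 2 / (ε + σ1 ^ 2) - (s - lam * s / (s + ε))
          = (σ1 ^ 2 - s) * ((ε + σ1 ^ 2) * (s + ε) - lam * ε) / ((ε + σ1 ^ 2) * (s + ε)) := by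
        field_simp
        ring
      have h2 : 0 ≤ (ε + σ1 ^ 2) * (s + ε) - lam * ε := by nlinarith
      have : 0 ≤ (σ1 ^ 2 - s) * ((ε + σ1 ^ 2) * (s + ε) - lam * ε) / ((ε + σ1 ^ 2) * (s + ε)) :=
        div_nonneg (mul_nonneg (by linarith) h2) (by positivity)
      linarith

/-- Here `w = (B + ε)⁻¹Bv` for `B = AᵀA`. -/
lemma spectral_bound {m n : ℕ} {A : Matrix (Fin m) (Fin n) ℝ} {σ1 σm ε lam : ℝ}
    (hσ1 : IsMaxSingularValue A σ1) (hσm : IsMinSingularValue A σm) (hε : 0 < ε)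
    (hm1 : σm ^ 2 ≤ σ1 ^ 2) (hlam : lam ≤ ε + σm ^ 2) {v w : Fin n → ℝ}
    (hw : (Aᵀ * A) *ᵥ w + ε • w = (Aᵀ * A) *ᵥ v) :
    norm2 ((Aᵀ * A) *ᵥ v - lam • w) ≤ (σ1 ^ 2 - lam * σ1 ^ 2 / (ε + σ1 ^ 2)) * norm2 v := by
  obtain ⟨b, s, heig, hpars, hs0, hs1, hsm⟩ := exists_eigenbasis hσ1 hσm
  have hc := (eigenvalue_bound hε (sq_nonneg σ1) le_rfl (Or.inr hm1) hm1 hlam).1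
  rw [add_comm (σ1 ^ 2) ε] at hc
  refine le_of_sq_le_sq_of_nonneg ?_ (mul_nonneg hc (norm2_nonneg _))
  rw [mul_pow, hpars, hpars v, Finset.mul_sum]
  refine Finset.sum_le_sum fun i _ => ?_
  have hse : 0 < s i + ε := by linarith [hs0 i]
  have hi : b i ⬝ᵥ w = s i * (b i ⬝ᵥ v) / (s i + ε) := by
    rw [eq_div_iff hse.ne', ← dot_gram (heig i) v, ← hw, dotProduct_add, dot_gram (heig i),
      dotProduct_smul, smul_eq_mul]
    ring
  have hr : b i ⬝ᵥ ((Aᵀ * A) *ᵥ v - lam • w) = (s i - lam * s i / (s i + ε)) * (b i ⬝ᵥ v) := by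
    rw [dotProduct_sub, dot_gram (heig i), dotProduct_smul, hi, smul_eq_mul]
    ring
  obtain ⟨h1, h2⟩ := eigenvalue_bound hε (hs0 i) (hs1 i) (hsm i) hm1 hlam
  rw [hr, mul_pow]
  exact mul_le_mul_of_nonneg_right (pow_le_pow_left₀ h1 h2 2) (sq_nonneg _)

/-- The norm of `(AᵀA + ε)⁻¹Aᵀ`, estimated through its adjoint `A(AᵀA + ε)⁻¹`, whose squared
singular values are `s / (s + ε)²`. -/
lemma noise_bound {m n : ℕ} {A : Matrix (Fin m) (Fin n) ℝ} {σ1 σm ε : ℝ}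
    (hσ1 : IsMaxSingularValue A σ1) (hσm : IsMinSingularValue A σm) (hε : 0 < ε)
    (hεσ : σ1 ^ 2 ≤ ε) {e : Fin m → ℝ} {z : Fin n → ℝ}
    (hz : (Aᵀ * A) *ᵥ z + ε • z = Aᵀ *ᵥ e) :
    norm2 z ≤ σ1 / (ε + σ1 ^ 2) * norm2 e := by
  obtain ⟨b, s, heig, hpars, hs0, hs1, hsm⟩ := exists_eigenbasis hσ1 hσm
  have hσ0 := hσ1.1
  set g := (Aᵀ * A + ε • (1 : Matrix (Fin n) (Fin n) ℝ))⁻¹ *ᵥ z with hg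
  have hgz : (Aᵀ * A) *ᵥ g + ε • g = z := resolvent_mulVec A hε z
  have hAg : norm2 (A *ᵥ g) ≤ σ1 / (ε + σ1 ^ 2) * norm2 z := by
    refine le_of_sq_le_sq_of_nonneg ?_ (mul_nonneg (by positivity) (norm2_nonneg _))
    -- polarize Parseval's identity to expand the quadratic form of `AᵀA` in the eigenbasis
    have hpol : norm2 (A *ᵥ g) ^ 2 = ∑ i, s i * (b i ⬝ᵥ g) ^ 2 := by
      have h1 := hpars (g + (Aᵀ * A) *ᵥ g)
      have h2 := hpars (g - (Aᵀ * A) *ᵥ g)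
      have h3 : norm2 (g + (Aᵀ * A) *ᵥ g) ^ 2 - norm2 (g - (Aᵀ * A) *ᵥ g) ^ 2
          = 4 * norm2 (A *ᵥ g) ^ 2 := by
        simp only [norm2_sq, mulVec_dot A, Matrix.mulVec_mulVec, add_dotProduct, dotProduct_add,
          sub_dotProduct, dotProduct_sub, dotProduct_comm ((Aᵀ * A) *ᵥ g) g]
        ring
      rw [h1, h2, ← Finset.sum_sub_distrib] at h3
      have h4 : ∑ i, ((b i ⬝ᵥ (g + (Aᵀ * A) *ᵥ g)) ^ 2 - (b i ⬝ᵥ (g - (Aᵀ * A) *ᵥ g)) ^ 2)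
          = 4 * ∑ i, s i * (b i ⬝ᵥ g) ^ 2 := by
        rw [Finset.mul_sum]
        refine Finset.sum_congr rfl fun i _ => ?_
        rw [dotProduct_add, dotProduct_sub, dot_gram (heig i)]
        ring
      linarith
    rw [hpol, mul_pow, hpars z, Finset.mul_sum]
    refine Finset.sum_le_sum fun i _ => ?_
    have hi : b i ⬝ᵥ z = (s i + ε) * (b i ⬝ᵥ g) := by
      rw [← hgz, dotProduct_add, dot_gram (heig i), dotProduct_smul, smul_eq_mul]
      ring
    rw [hi, mul_pow, ← mul_assoc]
    refine mul_le_mul_of_nonneg_right ?_ (sq_nonneg _)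
    rw [div_pow, div_mul_eq_mul_div, le_div_iff₀ (by positivity)]
    -- the difference of the two sides is `(σ₁² - s)(ε² - s σ₁²)`
    have hd : 0 ≤ (σ1 ^ 2 - s i) * (ε ^ 2 - s i * σ1 ^ 2) := by
      refine mul_nonneg (by linarith [hs1 i]) ?_
      nlinarith [hs0 i, hs1 i, sq_nonneg σ1]
    nlinarith [hd]
  have hzz : norm2 z ^ 2 = (A *ᵥ g) ⬝ᵥ e := by
    have hsymm : g ⬝ᵥ ((Aᵀ * A) *ᵥ z) = z ⬝ᵥ ((Aᵀ * A) *ᵥ g) := by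
      rw [← Matrix.mulVec_mulVec, ← Matrix.mulVec_mulVec, ← mulVec_dot, ← mulVec_dot,
        dotProduct_comm]
    rw [mulVec_dot, ← hz, dotProduct_add, dotProduct_smul, hsymm, dotProduct_comm g z,
      ← dotProduct_smul, ← dotProduct_add, hgz, norm2_sq]
  rcases (norm2_nonneg z).eq_or_lt with h0 | h0
  · rw [← h0]; exact mul_nonneg (by positivity) (norm2_nonneg e)
  · refine le_of_mul_le_mul_left ?_ h0
    have := dotProduct_le_norm2 (A *ᵥ g) e
    have := mul_le_mul_of_nonneg_right hAg (norm2_nonneg e)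
    nlinarith

/-! ### The recursion -/

lemma geometric_recursion {a : ℕ → ℝ} {ρ c : ℝ} (h0 : 0 ≤ ρ) (h1 : ρ < 1) (hc : 0 ≤ c)
    (h : ∀ p, a (p + 1) ≤ ρ * a p + c) (p : ℕ) : a p ≤ ρ ^ p * a 0 + c / (1 - ρ) := by
  have h1' : 0 < 1 - ρ := by linarith
  induction p with
  | zero => simpa using div_nonneg hc h1'.le
  | succ p ih =>
    have e1 : ρ * (c / (1 - ρ)) + c = c / (1 - ρ) := by field_simp; ring
    have := mul_le_mul_of_nonneg_left ih h0
    have := h p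
    rw [pow_succ]
    nlinarith

lemma one_sub_le_sq {m n q : ℕ} {A : Matrix (Fin m) (Fin n) ℝ} {σ1 δ : ℝ}
    (hσ1 : IsMaxSingularValue A σ1) (hq : 0 < q) (hn : 0 < n) (hδ : IsRIC A q δ) :
    1 - δ ≤ σ1 ^ 2 := by
  set v : Fin n → ℝ := Pi.single ⟨0, hn⟩ 1 with hv
  have hv1 : norm2 v ^ 2 = 1 := by
    rw [norm2_sq, hv]; simp
  have hsupp : (supp v).ncard ≤ q := by
    have : supp v ⊆ {⟨0, hn⟩} := fun i hi => by
      by_contra hne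
      exact hi (Pi.single_eq_of_ne (M := fun _ => ℝ) hne 1)
    calc _ ≤ _ := Set.ncard_le_ncard this (Set.toFinite _)
      _ = 1 := Set.ncard_singleton _
      _ ≤ q := hq
  have h1 := (hδ.2.2 v hsupp).1
  have h2 := pow_le_pow_left₀ (norm2_nonneg _) (hσ1.2.1 v) 2
  rw [mul_pow, hv1] at h2
  rw [hv1] at h1
  linarith

lemma min_sq_le_max_sq {m n : ℕ} {A : Matrix (Fin m) (Fin n) ℝ} {σ1 σm : ℝ}
    (hσ1 : IsMaxSingularValue A σ1) (hσm : IsMinSingularValue A σm) : σm ^ 2 ≤ σ1 ^ 2 := by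
  obtain ⟨u, hu, hAu⟩ := hσm.2.2
  have hpos := norm2_pos hu
  rcases hσm.1.eq_or_lt with h0 | h0
  · rw [← h0, zero_pow two_ne_zero]; positivity
  have hw : 0 < norm2 (Aᵀ *ᵥ u) := by rw [hAu]; positivity
  have h1 : norm2 (Aᵀ *ᵥ u) ^ 2 ≤ norm2 u * norm2 (A *ᵥ (Aᵀ *ᵥ u)) := by
    have := dotProduct_le_norm2 (A *ᵥ (Aᵀ *ᵥ u)) u
    rw [mulVec_dot, ← norm2_sq] at this
    linarith
  have h2 := hσ1.2.1 (Aᵀ *ᵥ u)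
  have h3 : norm2 (Aᵀ *ᵥ u) ≤ norm2 u * σ1 := by
    refine le_of_mul_le_mul_right ?_ hw
    nlinarith
  rw [hAu] at h3
  exact pow_le_pow_left₀ hσm.1 (by nlinarith) 2

/-- Theorem 4.1: NSIHT recovery error bound in noisy settings. -/
theorem stmt_12 {m n : ℕ} (hmn : m ≤ n) (A : Matrix (Fin m) (Fin n) ℝ) (hA : A ≠ 0)
    (σ1 σm : ℝ) (hσ1 : IsMaxSingularValue A σ1) (hσm : IsMinSingularValue A σm)
    (k : ℕ) (hk : 0 < k) (hkn : 3 * k ≤ n)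
    (δ : ℝ) (hδ : IsRIC A (3 * k) δ) (hδ3 : δ < 1 / Real.sqrt 3)
    (ε lam : ℝ)
    (hε : max (σ1 ^ 2) (((σ1 ^ 2 - σm ^ 2) / (1 / Real.sqrt 3 - δ) - 1) * σ1 ^ 2) < ε)
    (hlam1 : ε + σ1 ^ 2 - (1 / Real.sqrt 3 - δ) * (ε + σ1 ^ 2) / σ1 ^ 2 < lam)
    (hlam2 : lam ≤ ε + σm ^ 2)
    (x : Fin n → ℝ) (e : Fin m → ℝ) (y : Fin m → ℝ) (hy : y = A.mulVec x + e)
    (xS : Fin n → ℝ) (hxS : ∃ S : Set (Fin n), IsHardThresholding k x xS S)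
    (e' : Fin m → ℝ) (he' : e' = A.mulVec (x - xS) + e)
    (xs : ℕ → Fin n → ℝ) (hx0 : (supp (xs 0)).ncard ≤ k)
    (hiter : ∀ p : ℕ, ∃ S : Set (Fin n),
      IsHardThresholding k
        (xs p + lam • ((Aᵀ * A + ε • (1 : Matrix (Fin n) (Fin n) ℝ))⁻¹).mulVec
          (Aᵀ.mulVec (y - A.mulVec (xs p))))
        (xs (p + 1)) S) :
    Real.sqrt 3 * (δ + σ1 ^ 2 - lam * σ1 ^ 2 / (ε + σ1 ^ 2)) < 1 ∧
    ∀ p : ℕ, norm2 (xs p - xS) ≤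
      (Real.sqrt 3 * (δ + σ1 ^ 2 - lam * σ1 ^ 2 / (ε + σ1 ^ 2))) ^ p * norm2 (xs 0 - xS) +
      Real.sqrt 3 * lam * σ1 /
        ((ε + σ1 ^ 2) *
          (1 - Real.sqrt 3 * (δ + σ1 ^ 2 - lam * σ1 ^ 2 / (ε + σ1 ^ 2)))) * norm2 e' := by
  obtain ⟨S, hS, -, hS0, -⟩ := hxS
  have hδ0 := hδ.1
  have hσ0 := hσ1.1
  have h3 : 0 < Real.sqrt 3 := Real.sqrt_pos.2 (by norm_num)
  have hinv3 : 1 / Real.sqrt 3 < 1 := by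
    rw [div_lt_one h3]
    exact Real.lt_sqrt_of_sq_lt (by norm_num)
  have hσsq : 1 - δ ≤ σ1 ^ 2 := one_sub_le_sq hσ1 (by omega) (by omega) hδ
  have hσpos : 0 < σ1 ^ 2 := by linarith [hδ.2.1]
  have hm1 := min_sq_le_max_sq hσ1 hσm
  have hεσ : σ1 ^ 2 < ε := lt_of_le_of_lt (le_max_left _ _) hε
  have hε0 : 0 < ε := hσpos.trans hεσ
  have hσe : 0 < ε + σ1 ^ 2 := by positivity
  have hlam0 : 0 < lam := by
    refine lt_of_le_of_lt ?_ hlam1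
    rw [sub_nonneg, div_le_iff₀ hσpos, mul_comm]
    exact mul_le_mul_of_nonneg_left (by linarith) hσe.le
  have hc : 0 ≤ σ1 ^ 2 - lam * σ1 ^ 2 / (ε + σ1 ^ 2) := by
    have := (eigenvalue_bound hε0 hσpos.le le_rfl (Or.inr hm1) hm1 hlam2).1
    rwa [add_comm (σ1 ^ 2) ε] at this
  have hθ : δ + σ1 ^ 2 - lam * σ1 ^ 2 / (ε + σ1 ^ 2) < 1 / Real.sqrt 3 := by
    have hσne : σ1 ≠ 0 := fun h => by simp [h] at hσpos
    have h : (ε + σ1 ^ 2 - (1 / Real.sqrt 3 - δ) * (ε + σ1 ^ 2) / σ1 ^ 2) * σ1 ^ 2 / (ε + σ1 ^ 2)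
        = σ1 ^ 2 - (1 / Real.sqrt 3 - δ) := by
      field_simp
    have h' := div_lt_div_of_pos_right (mul_lt_mul_of_pos_right hlam1 hσpos) hσe
    rw [h] at h'
    linarith
  set ρ := Real.sqrt 3 * (δ + σ1 ^ 2 - lam * σ1 ^ 2 / (ε + σ1 ^ 2)) with hρ
  have hρ1 : ρ < 1 := by
    rw [lt_div_iff₀ h3] at hθ
    rw [hρ, mul_comm]; exact hθ
  have hρ0 : 0 ≤ ρ := mul_nonneg h3.le (by linarith)
  refine ⟨hρ1, ?_⟩
  have hsupp : ∀ p, (supp (xs p)).ncard ≤ k := by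
    rintro (_ | p)
    · exact hx0
    · obtain ⟨T, hT, -, hT0, -⟩ := hiter p
      rw [← hT]
      refine Set.ncard_le_ncard (fun i hi => ?_) (Set.toFinite _)
      by_contra h
      exact hi (hT0 i h)
  have hstep : ∀ p, norm2 (xs (p + 1) - xS) ≤ ρ * norm2 (xs p - xS)
      + Real.sqrt 3 * (lam * (σ1 / (ε + σ1 ^ 2) * norm2 e')) := by
    intro p
    obtain ⟨T, hT⟩ := hiter p
    set G := (Aᵀ * A + ε • (1 : Matrix (Fin n) (Fin n) ℝ))⁻¹ with hG
    set v := xs p - xS with hv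
    have hres : y - A *ᵥ xs p = e' - A *ᵥ v := by
      rw [hy, he', hv, Matrix.mulVec_sub, Matrix.mulVec_sub]
      abel
    have hdecomp : xs p + lam • (G *ᵥ (Aᵀ *ᵥ (y - A *ᵥ xs p))) - xS
        = (v - (Aᵀ * A) *ᵥ v) + ((Aᵀ * A) *ᵥ v - lam • (G *ᵥ ((Aᵀ * A) *ᵥ v)))
          + lam • (G *ᵥ (Aᵀ *ᵥ e')) := by
      rw [hres, Matrix.mulVec_sub, Matrix.mulVec_sub, Matrix.mulVec_mulVec v Aᵀ A, smul_sub, hv]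
      abel
    have hthr := threshold_bound hT hS hS0
    rw [hdecomp, Set.indicator_add', Set.indicator_add'] at hthr
    have hU : (S ∪ T ∪ supp (xs p)).ncard ≤ 3 * k := by
      have h1 := Set.ncard_union_le (S ∪ T) (supp (xs p))
      have h2 := Set.ncard_union_le S T
      have h4 := hsupp p
      have h5 := hT.1
      omega
    have b1 := rip_restrict hδ hU (T := S ∪ T) Set.subset_union_left (v := v) (by
      intro i hi
      simp only [Set.mem_union, not_or] at hi
      have hxi : xs p i = 0 := by
        by_contra h
        exact hi.2 h
      simp [hv, hxi, hS0 i hi.1.1])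
    have b2 := (norm2_indicator_le (S ∪ T) _).trans
      (spectral_bound hσ1 hσm hε0 hm1 hlam2 (resolvent_mulVec A hε0 ((Aᵀ * A) *ᵥ v)))
    have b3 := noise_bound hσ1 hσm hε0 hεσ.le (resolvent_mulVec A hε0 (Aᵀ *ᵥ e'))
    have b4 : norm2 ((S ∪ T).indicator (lam • (G *ᵥ (Aᵀ *ᵥ e'))))
        ≤ lam * (σ1 / (ε + σ1 ^ 2) * norm2 e') := by
      refine (norm2_indicator_le _ _).trans ?_
      rw [norm2_smul, abs_of_pos hlam0]
      exact mul_le_mul_of_nonneg_left b3 hlam0.le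
    refine hthr.trans ?_
    rw [hρ, mul_assoc, ← mul_add]
    refine mul_le_mul_of_nonneg_left ?_ h3.le
    refine (norm2_add_le _ _).trans ?_
    refine (add_le_add_left (norm2_add_le _ _) _).trans ?_
    linarith
  intro p
  have h := geometric_recursion (a := fun p => norm2 (xs p - xS)) hρ0 hρ1
    (mul_nonneg h3.le (mul_nonneg hlam0.le (mul_nonneg (div_nonneg hσ0 hσe.le) (norm2_nonneg e')))) hstep p
  refine h.trans (le_of_eq ?_)
  have h1ρ : 1 - ρ ≠ 0 := by linarith
  congr 1
  field_simp
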